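/- arXiv:1505.02939 — 2 statements merged into one kernel-verified Lean document; each statement's English description precedes it below -/
import Mathlib

section
/- There exists a universal constant K₀ > 0 with the following property. Let L > 1 and M ≥ 0 be real numbers, and let f : ℝ → ℝ be a continuous function with f(y + 2π) = f(y) for all y, |f(y)| ≤ M for all y, and ∫₀^{2π} f(y) dy = 0. Let h : [0,L] × ℝ → ℝ be continuous, satisfy h(x, y + 2π) = h(x, y) for all (x,y), be harmonic on the open strip (0,L) × ℝ, and satisfy the boundary conditions h(0, y) = f(y) and h(L, y) = f(y) for all y ∈ ℝ. Then for every y ∈ ℝ, |h(L/2, y)| ≤ K₀ · M · e^{−L/2}. (The constant K₀ is independent of L, M, f and h.) -/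
open Real MeasureTheory

/-- The Laplacian of a function `u : ℝ × ℝ → ℝ` at a point `p`,
expressed via iterated partial derivatives in each coordinate. -/
noncomputable def laplacian (u : ℝ × ℝ → ℝ) (p : ℝ × ℝ) : ℝ :=
  deriv (fun x => deriv (fun x' => u (x', p.2)) x) p.1 +
  deriv (fun y => deriv (fun y' => u (p.1, y')) y) p.2

/-- A function is harmonic on an open set `U ⊆ ℝ²` if it is twice continuously
differentiable there and satisfies Laplace's equation on `U`. -/
def HarmonicOn (u : ℝ × ℝ → ℝ) (U : Set (ℝ × ℝ)) : Prop :=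
  ContDiffOn ℝ 2 u U ∧ ∀ p ∈ U, laplacian u p = 0

lemma ccd_param {L : ℝ} {F F' : ℝ × ℝ → ℂ}
    (hF : ContinuousOn F (Set.Ioo 0 L ×ˢ (Set.univ : Set ℝ)))
    (hF' : ContinuousOn F' (Set.Ioo 0 L ×ˢ (Set.univ : Set ℝ)))
    (hd : ∀ x ∈ Set.Ioo 0 L, ∀ y : ℝ, HasDerivAt (fun x => F (x, y)) (F' (x, y)) x)
    {x₀ : ℝ} (hx₀ : x₀ ∈ Set.Ioo 0 L) :
    HasDerivAt (fun x => ∫ y in (0:ℝ)..(2 * π), F (x, y)) (∫ y in (0:ℝ)..(2 * π), F' (x₀, y)) x₀ := by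
  obtain ⟨a, b, hab, hmem, hsub⟩ : ∃ a b : ℝ, a < b ∧ x₀ ∈ Set.Ioo a b ∧ Set.Icc a b ⊆ Set.Ioo 0 L := by
    refine ⟨x₀ / 2, (x₀ + L) / 2, ?_, ⟨?_, ?_⟩, fun z hz => ⟨?_, ?_⟩⟩ <;>
      first
      | (have := hx₀.1; have := hx₀.2; linarith)
      | (have := hx₀.1; have := hx₀.2; have := hz.1; have := hz.2; linarith)
  have sl : ∀ {G : ℝ × ℝ → ℂ}, ContinuousOn G (Set.Ioo 0 L ×ˢ (Set.univ : Set ℝ)) →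
      ∀ x ∈ Set.Ioo 0 L, Continuous (fun y => G (x, y)) := by
    intro G hG x hx
    rw [← continuousOn_univ]
    exact hG.comp (by fun_prop) (fun y _ => ⟨hx, trivial⟩)
  have hc : IsCompact (Set.Icc a b ×ˢ Set.Icc (0:ℝ) (2 * π)) := isCompact_Icc.prod isCompact_Icc
  obtain ⟨C, hC⟩ := hc.exists_bound_of_continuousOn
    (hF'.mono (Set.prod_mono hsub (Set.subset_univ _)))
  refine (intervalIntegral.hasDerivAt_integral_of_dominated_loc_of_deriv_le
    (F := fun x y => F (x, y)) (F' := fun x y => F' (x, y)) (s := Set.Icc a b) (bound := fun _ => C)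
    (Icc_mem_nhds hmem.1 hmem.2) ?_ ?_ ?_ ?_ ?_ ?_).2
  · filter_upwards [Ioo_mem_nhds hx₀.1 hx₀.2] with x hx
    exact (sl hF x hx).aestronglyMeasurable
  · exact (sl hF x₀ hx₀).intervalIntegrable _ _
  · exact (sl hF' x₀ hx₀).aestronglyMeasurable
  · refine Filter.Eventually.of_forall fun t ht x hx => hC (x, t) ⟨hx, ?_⟩
    rw [Set.uIoc_of_le Real.two_pi_pos.le] at ht
    exact ⟨ht.1.le, ht.2⟩
  · exact intervalIntegrable_const
  · exact Filter.Eventually.of_forall fun t ht x hx => hd x (hsub hx) t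

lemma ccd_cont {L : ℝ} (hL : 0 ≤ L) {F : ℝ × ℝ → ℂ}
    (hF : ContinuousOn F (Set.Icc 0 L ×ˢ (Set.univ : Set ℝ))) :
    ContinuousOn (fun x => ∫ y in (0:ℝ)..(2 * π), F (x, y)) (Set.Icc 0 L) := by
  have h1 : Continuous (fun p : ℝ × ℝ => F ((Set.projIcc 0 L hL p.1 : ℝ), p.2)) := by
    rw [← continuousOn_univ]
    refine hF.comp (Continuous.continuousOn ?_) (fun p _ => ⟨(Set.projIcc 0 L hL p.1).2, trivial⟩)
    exact (continuous_subtype_val.comp (continuous_projIcc.comp continuous_fst)).prodMk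
      continuous_snd
  have h2 := intervalIntegral.continuous_parametric_intervalIntegral_of_continuous'
    (f := fun x y => F ((Set.projIcc 0 L hL x : ℝ), y)) (μ := volume) h1 0 (2 * π)
  refine h2.continuousOn.congr fun x hx => ?_
  simp only [Set.projIcc_of_mem hL hx]

lemma ccd_ode {L ν : ℝ} (hL : 0 < L) {A A' : ℝ → ℂ} (hA : ContinuousOn A (Set.Icc 0 L))
    (h1 : ∀ x ∈ Set.Ioo 0 L, HasDerivAt A (A' x) x)
    (h2 : ∀ x ∈ Set.Ioo 0 L, HasDerivAt A' ((ν:ℂ) ^ 2 * A x) x) :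
    2 * A (L / 2) * (Real.cosh (ν * (L / 2)) : ℂ) = A 0 + A L := by
  set D : ℝ → ℂ := fun t => A (L / 2 + t) + A (L / 2 - t) with hD
  set D' : ℝ → ℂ := fun t => A' (L / 2 + t) - A' (L / 2 - t) with hD'
  have m1 : ∀ t ∈ Set.Ioo (-(L/2)) (L/2), L / 2 + t ∈ Set.Ioo 0 L := fun t ht =>
    ⟨by linarith [ht.1], by linarith [ht.2]⟩
  have m2 : ∀ t ∈ Set.Ioo (-(L/2)) (L/2), L / 2 - t ∈ Set.Ioo 0 L := fun t ht =>
    ⟨by linarith [ht.2], by linarith [ht.1]⟩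
  have d1 : ∀ t ∈ Set.Ioo (-(L/2)) (L/2), HasDerivAt D (D' t) t := by
    intro t ht
    have e1 := (h1 _ (m1 t ht)).comp_const_add (L/2) t
    have e2 := (h1 _ (m2 t ht)).comp_const_sub (L/2) t
    simpa [hD, hD', sub_eq_add_neg] using! e1.add e2
  have d2 : ∀ t ∈ Set.Ioo (-(L/2)) (L/2), HasDerivAt D' ((ν:ℂ)^2 * D t) t := by
    intro t ht
    have e1 := (h2 _ (m1 t ht)).comp_const_add (L/2) t
    have e2 := (h2 _ (m2 t ht)).comp_const_sub (L/2) t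
    have := e1.sub e2
    rw [sub_neg_eq_add, ← mul_add] at this
    exact this
  have dc : ∀ t : ℝ, HasDerivAt (fun t : ℝ => ((Real.cosh (ν * t) : ℝ) : ℂ))
      ((Real.sinh (ν * t) * ν : ℝ) : ℂ) t := fun t => by
    have : HasDerivAt (fun t : ℝ => Real.cosh (ν * t)) (Real.sinh (ν * t) * ν) t := by
      simpa using ((hasDerivAt_id t).const_mul ν).cosh
    exact this.ofReal_comp
  have ds : ∀ t : ℝ, HasDerivAt (fun t : ℝ => ((Real.sinh (ν * t) : ℝ) : ℂ))
      ((Real.cosh (ν * t) * ν : ℝ) : ℂ) t := fun t => by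
    have : HasDerivAt (fun t : ℝ => Real.sinh (ν * t)) (Real.cosh (ν * t) * ν) t := by
      simpa using ((hasDerivAt_id t).const_mul ν).sinh
    exact this.ofReal_comp
  have hne : ∀ t : ℝ, ((Real.cosh (ν * t) : ℝ) : ℂ) ≠ 0 := fun t => by
    exact_mod_cast (Real.cosh_pos _).ne'
  have z0 : (0:ℝ) ∈ Set.Ioo (-(L/2)) (L/2) := ⟨by linarith, by linarith⟩
  have W0 : ∀ t ∈ Set.Ioo (-(L/2)) (L/2),
      D' t * (Real.cosh (ν * t) : ℝ) - ν * D t * (Real.sinh (ν * t) : ℝ) = 0 := by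
    have dW : ∀ t ∈ Set.Ioo (-(L/2)) (L/2), HasDerivAt (fun t =>
        D' t * ((Real.cosh (ν * t) : ℝ) : ℂ) - ν * D t * ((Real.sinh (ν * t) : ℝ) : ℂ)) 0 t := by
      intro t ht
      have := ((d2 t ht).mul (dc t)).sub (((d1 t ht).const_mul (ν:ℂ)).mul (ds t))
      refine this.congr_deriv ?_
      push_cast; ring
    intro t ht
    have := isOpen_Ioo.is_const_of_deriv_eq_zero isPreconnected_Ioo
      (fun t ht => (dW t ht).differentiableAt.differentiableWithinAt)
      (fun t ht => (dW t ht).deriv) ht z0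
    rw [this]
    simp [hD']
  have hDc : ContinuousOn D (Set.Icc 0 (L/2)) := by
    refine (hA.comp (by fun_prop) fun t ht => ?_).add (hA.comp (by fun_prop) fun t ht => ?_)
    · exact ⟨by linarith [ht.1], by linarith [ht.2]⟩
    · exact ⟨by linarith [ht.2], by linarith [ht.1]⟩
  have key := constant_of_has_deriv_right_zero
    (f := fun t => D t / ((Real.cosh (ν * t) : ℝ) : ℂ)) (a := 0) (b := L/2)
    (hDc.div (fun t _ => (dc t).continuousAt.continuousWithinAt) (fun t _ => hne t))
    (fun t ht => by
      have ht' : t ∈ Set.Ioo (-(L/2)) (L/2) := ⟨by linarith [ht.1], ht.2⟩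
      refine (((d1 t ht').div (dc t) (hne t)).congr_deriv ?_).hasDerivWithinAt
      have := W0 t ht'
      rw [div_eq_zero_iff]; left
      rw [← this]; push_cast; ring) (L/2) ⟨by linarith, le_rfl⟩
  simp only [mul_zero, Real.cosh_zero, Complex.ofReal_one, div_one] at key
  rw [div_eq_iff (hne _)] at key
  simp only [hD] at key
  have e1 : L / 2 + L / 2 = L := by ring
  rw [e1, sub_self, add_zero, sub_zero] at key
  rw [add_comm (A 0), key]; ring

lemma ccd_coeff {L : ℝ} (hL : 0 < L) {h : ℝ × ℝ → ℝ}
    (hc : ContinuousOn h (Set.Icc 0 L ×ˢ (Set.univ : Set ℝ)))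
    (hp : ∀ x ∈ Set.Icc (0 : ℝ) L, ∀ y : ℝ, h (x, y + 2 * π) = h (x, y))
    (hh : HarmonicOn h (Set.Ioo 0 L ×ˢ (Set.univ : Set ℝ)))
    (ν : ℝ) (e : ℝ → ℂ) (he : ∀ y, HasDerivAt e (-Complex.I * ν * e y) y)
    (hep : e (2 * π) = e 0) :
    2 * (∫ y in (0:ℝ)..(2 * π), e y * h (L / 2, y)) * (Real.cosh (ν * (L / 2)) : ℂ) =
      (∫ y in (0:ℝ)..(2 * π), e y * h (0, y)) + ∫ y in (0:ℝ)..(2 * π), e y * h (L, y) := by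
  set U := Set.Ioo 0 L ×ˢ (Set.univ : Set ℝ) with hU
  have hUo : IsOpen U := isOpen_Ioo.prod isOpen_univ
  obtain ⟨h2, hl⟩ := hh
  have ec : Continuous e := continuous_iff_continuousAt.2 fun y => (he y).continuousAt
  -- directional derivatives
  have dx : ∀ {u : ℝ × ℝ → ℝ}, ContDiffOn ℝ 1 u U → ∀ x ∈ Set.Ioo 0 L, ∀ y : ℝ,
      HasDerivAt (fun x => u (x, y)) (fderiv ℝ u (x, y) (1, 0)) x := by
    intro u hu x hx y
    have hd : DifferentiableAt ℝ u (x, y) :=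
      (hu.contDiffAt (hUo.mem_nhds ⟨hx, trivial⟩)).differentiableAt (by norm_num)
    exact hd.hasFDerivAt.comp_hasDerivAt x ((hasDerivAt_id x).prodMk (hasDerivAt_const x y))
  have dy : ∀ {u : ℝ × ℝ → ℝ}, ContDiffOn ℝ 1 u U → ∀ x ∈ Set.Ioo 0 L, ∀ y : ℝ,
      HasDerivAt (fun y => u (x, y)) (fderiv ℝ u (x, y) (0, 1)) y := by
    intro u hu x hx y
    have hd : DifferentiableAt ℝ u (x, y) :=
      (hu.contDiffAt (hUo.mem_nhds ⟨hx, trivial⟩)).differentiableAt (by norm_num)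
    exact hd.hasFDerivAt.comp_hasDerivAt y ((hasDerivAt_const y x).prodMk (hasDerivAt_id y))
  have h1 : ContDiffOn ℝ 1 h U := h2.of_le (by norm_num)
  have hfd : ContDiffOn ℝ 1 (fderiv ℝ h) U := h2.fderiv_of_isOpen hUo (by norm_num)
  have hx1 : ContDiffOn ℝ 1 (fun p => fderiv ℝ h p (1, 0)) U := hfd.clm_apply contDiffOn_const
  have hy1 : ContDiffOn ℝ 1 (fun p => fderiv ℝ h p (0, 1)) U := hfd.clm_apply contDiffOn_const
  set hx := fun p => fderiv ℝ h p (1, 0) with hhx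
  set hy := fun p => fderiv ℝ h p (0, 1) with hhy
  have hxx : ContinuousOn (fun p => fderiv ℝ hx p (1, 0)) U :=
    (hx1.continuousOn_fderiv_of_isOpen hUo (by norm_num)).clm_apply continuousOn_const
  have hyy : ContinuousOn (fun p => fderiv ℝ hy p (0, 1)) U :=
    (hy1.continuousOn_fderiv_of_isOpen hUo (by norm_num)).clm_apply continuousOn_const
  have lap : ∀ x ∈ Set.Ioo 0 L, ∀ y : ℝ,
      fderiv ℝ hx (x, y) (1, 0) + fderiv ℝ hy (x, y) (0, 1) = 0 := by
    intro x hxm y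
    refine Eq.trans ?_ (hl (x, y) ⟨hxm, trivial⟩)
    rw [laplacian]
    congr 1
    · rw [← (dx hx1 x hxm y).deriv]
      refine Filter.EventuallyEq.deriv_eq ?_
      filter_upwards [Ioo_mem_nhds hxm.1 hxm.2] with z hz
      exact (dx h1 z hz y).deriv.symm
    · rw [← (dy hy1 x hxm y).deriv]
      congr 1
      funext z
      exact (dy h1 x hxm z).deriv.symm
  have slc : ∀ {G : ℝ × ℝ → ℝ}, ContinuousOn G U →
      ∀ x ∈ Set.Ioo 0 L, Continuous (fun y => G (x, y)) := by
    intro G hG x hx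
    rw [← continuousOn_univ]
    exact hG.comp (by fun_prop) (fun y _ => ⟨hx, trivial⟩)
  have mulc : ∀ {G : ℝ × ℝ → ℝ} {S : Set (ℝ × ℝ)}, ContinuousOn G S →
      ContinuousOn (fun p : ℝ × ℝ => e p.2 * (G p : ℂ)) S := by
    intro G S hG
    exact (ec.comp continuous_snd).continuousOn.mul (Complex.continuous_ofReal.comp_continuousOn hG)
  -- the second derivative identity
  have ibp : ∀ x ∈ Set.Ioo 0 L, ∫ y in (0:ℝ)..(2 * π), e y * ((fderiv ℝ hx (x, y) (1, 0) : ℝ) : ℂ)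
      = (ν:ℂ) ^ 2 * ∫ y in (0:ℝ)..(2 * π), e y * h (x, y) := by
    intro x hxm
    have hG : ∀ y : ℝ, HasDerivAt
        (fun y => (-Complex.I * ν * e y) * (h (x, y) : ℂ) - e y * (hy (x, y) : ℂ))
        (e y * ((fderiv ℝ hx (x, y) (1, 0) : ℝ) : ℂ) - (ν:ℂ)^2 * (e y * h (x, y))) y := by
      intro y
      have a1 := ((he y).const_mul (-Complex.I * ν)).mul (dy h1 x hxm y).ofReal_comp
      have a2 := (he y).mul (dy hy1 x hxm y).ofReal_comp
      refine (a1.sub a2).congr_deriv ?_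
      have l1 : ((fderiv ℝ hx (x, y) (1, 0) : ℝ) : ℂ) = -((fderiv ℝ hy (x, y) (0, 1) : ℝ) : ℂ) := by
        rw [← Complex.ofReal_neg]; congr 1; linarith [lap x hxm y]
      rw [l1]
      have hI := Complex.I_sq
      have : (hy (x, y) : ℂ) = ((fderiv ℝ h (x, y) (0, 1) : ℝ) : ℂ) := rfl
      rw [this]
      linear_combination ((ν:ℂ)^2 * e y * h (x, y)) * hI
    have c1 : Continuous (fun y => e y * ((fderiv ℝ hx (x, y) (1, 0) : ℝ) : ℂ)) :=
      ec.mul (Complex.continuous_ofReal.comp (slc hxx x hxm))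
    have c2 : Continuous (fun y => (ν:ℂ)^2 * (e y * h (x, y))) :=
      continuous_const.mul (ec.mul (Complex.continuous_ofReal.comp (slc h1.continuousOn x hxm)))
    have := intervalIntegral.integral_eq_sub_of_hasDerivAt (a := 0) (b := 2 * π)
      (fun y _ => hG y) ((c1.sub c2).intervalIntegrable _ _)
    have xI : x ∈ Set.Icc 0 L := ⟨hxm.1.le, hxm.2.le⟩
    have p1 : h (x, 2 * π) = h (x, 0) := by simpa using hp x xI 0
    have p2 : hy (x, 2 * π) = hy (x, 0) := by
      have b1 := (dy h1 x hxm (0 + 2 * π)).comp_add_const 0 (2 * π)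
      have b2 := dy h1 x hxm 0
      have : (fun y => h (x, y + 2 * π)) = fun y => h (x, y) := funext (hp x xI)
      rw [this] at b1
      simpa using b1.unique b2
    rw [p1, p2, hep, sub_self, intervalIntegral.integral_sub (c1.intervalIntegrable _ _)
      (c2.intervalIntegrable _ _), intervalIntegral.integral_const_mul, sub_eq_zero] at this
    exact this
  refine ccd_ode (ν := ν) hL (A := fun x => ∫ y in (0:ℝ)..(2 * π), e y * h (x, y))
    (A' := fun x => ∫ y in (0:ℝ)..(2 * π), e y * hx (x, y)) ?_ ?_ ?_
  · exact ccd_cont hL.le (mulc hc)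
  · intro x hxm
    exact ccd_param (mulc h1.continuousOn) (mulc hx1.continuousOn)
      (fun x hx y => (dx h1 x hx y).ofReal_comp.const_mul (e y)) hxm
  · intro x hxm
    have := ccd_param (mulc hx1.continuousOn) (mulc hxx)
      (fun x hx y => (dx hx1 x hx y).ofReal_comp.const_mul (e y)) hxm
    exact this.congr_deriv (ibp x hxm)

lemma ccd_summable : Summable (fun n : ℤ => Real.exp (-1/2) ^ n.natAbs) := by
  have h : Summable (fun n : ℕ => Real.exp (-1/2) ^ n) :=
    summable_geometric_of_lt_one (Real.exp_pos _).le (by rw [← Real.exp_zero]; exact Real.exp_lt_exp.2 (by norm_num))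
  refine Summable.of_nat_of_neg ?_ ?_ <;> simpa using h

lemma ccd_bound {L M : ℝ} {f : ℝ → ℝ} {h : ℝ × ℝ → ℝ} (hL : 1 < L) (hM : 0 ≤ M)
    (hb : ∀ y : ℝ, |f y| ≤ M)
    (hi : (∫ y in (0 : ℝ)..(2 * π), f y) = 0)
    (hc : ContinuousOn h (Set.Icc 0 L ×ˢ (Set.univ : Set ℝ)))
    (hp : ∀ x ∈ Set.Icc (0 : ℝ) L, ∀ y : ℝ, h (x, y + 2 * π) = h (x, y))
    (hh : HarmonicOn h (Set.Ioo 0 L ×ˢ (Set.univ : Set ℝ)))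
    (h0 : ∀ y : ℝ, h (0, y) = f y) (h1 : ∀ y : ℝ, h (L, y) = f y) (n : ℤ) (e : ℝ → ℂ)
    (he : ∀ y, e y = Complex.exp (-Complex.I * n * y)) :
    ‖∫ y in (0:ℝ)..(2 * π), e y * h (L / 2, y)‖ ≤
      2 * π * (2 * Real.exp (1/2) * M * Real.exp (-L / 2) * Real.exp (-1/2) ^ n.natAbs) := by
  have hd : ∀ y, HasDerivAt e (-Complex.I * (n:ℝ) * e y) y := by
    intro y
    have e1 : e = fun y : ℝ => Complex.exp (-Complex.I * n * y) := funext he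
    rw [e1]
    have := (((hasDerivAt_id (y:ℂ)).const_mul (-Complex.I * n)).cexp).comp_ofReal
    refine this.congr_deriv ?_
    simp; ring
  have hep : e (2 * π) = e 0 := by
    rw [he, he]
    have : -Complex.I * n * ((2 * π : ℝ) : ℂ) = (-n : ℤ) * (2 * π * Complex.I) := by
      push_cast; ring
    rw [this, Complex.exp_int_mul_two_pi_mul_I]; simp
  have key := ccd_coeff (by linarith) hc hp hh n e hd hep
  simp only [h0, h1] at key
  set A := ∫ y in (0:ℝ)..(2 * π), e y * h (L / 2, y)
  set B := ∫ y in (0:ℝ)..(2 * π), e y * (f y : ℂ) with hB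
  have key2 : A * (Real.cosh (n * (L / 2)) : ℂ) = B := by linear_combination key / 2
  have pp := Real.pi_pos
  by_cases hn : n = 0
  · have B0 : B = 0 := by
      have : ∀ y, e y * (f y : ℂ) = (f y : ℂ) := fun y => by simp [he, hn]
      rw [hB]
      simp only [this]
      rw [intervalIntegral.integral_ofReal, hi, Complex.ofReal_zero]
    have : A = 0 := by
      rw [B0] at key2
      simpa [hn] using key2
    rw [this, norm_zero]
    positivity
  · have hBn : ‖B‖ ≤ M * (2 * π) := by
      have := intervalIntegral.norm_integral_le_of_norm_le_const (a := 0) (b := 2 * π) (C := M)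
        (f := fun y => e y * (f y : ℂ)) (fun y _ => by
          have : ‖e y‖ = 1 := by rw [he, Complex.norm_exp]; simp
          rw [norm_mul, this, one_mul, Complex.norm_real]
          exact hb y)
      rwa [sub_zero, abs_of_pos Real.two_pi_pos] at this
    rw [← key2, norm_mul, Complex.norm_real, Real.norm_eq_abs, abs_of_pos (Real.cosh_pos _)] at hBn
    have hcosh : Real.exp (n.natAbs * (L / 2)) / 2 ≤ Real.cosh (n * (L / 2)) := by
      have e1 : (n.natAbs : ℝ) * (L / 2) = |(n:ℝ) * (L / 2)| := by
        rw [abs_mul, abs_of_pos (by linarith : 0 < L / 2), Nat.cast_natAbs, Int.cast_abs]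
      rw [e1, ← Real.cosh_abs ((n:ℝ) * (L / 2)), Real.cosh_eq]
      have := Real.exp_pos (-|(n:ℝ) * (L / 2)|)
      linarith
    have hN : (1:ℝ) ≤ n.natAbs := by
      exact_mod_cast Int.natAbs_pos.2 hn
    have hexp : 1 ≤ Real.exp (n.natAbs * (L / 2)) *
        (Real.exp (1/2) * Real.exp (-L / 2) * Real.exp (-1/2) ^ n.natAbs) := by
      rw [← Real.exp_nat_mul, ← Real.exp_add, ← Real.exp_add, ← Real.exp_add]
      apply Real.one_le_exp
      nlinarith
    set E := Real.exp (n.natAbs * (L / 2))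
    set Q := Real.exp (1/2) * Real.exp (-L / 2) * Real.exp (-1/2) ^ n.natAbs with hQ
    have hE : 0 < E := Real.exp_pos _
    have s1 : ‖A‖ * (E / 2) ≤ M * (2 * π) :=
      (mul_le_mul_of_nonneg_left hcosh (norm_nonneg _)).trans hBn
    have s2 : 2 * π * (2 * Real.exp (1/2) * M * Real.exp (-L / 2) * Real.exp (-1/2) ^ n.natAbs)
        = 4 * π * M * Q := by rw [hQ]; ring
    rw [s2]
    have Qp : 0 ≤ Q := by positivity
    calc ‖A‖ ≤ ‖A‖ * (E * Q) := le_mul_of_one_le_right (norm_nonneg _) hexp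
      _ = 2 * (‖A‖ * (E / 2)) * Q := by ring
      _ ≤ 2 * (M * (2 * π)) * Q := by gcongr
      _ = 4 * π * M * Q := by ring

/-- There is a universal constant `K₀ > 0` such that any harmonic function on the
cylinder `[0,L] × ℝ` (of circumference `2π`, i.e. `2π`-periodic in the second variable)
with identical boundary data `f` on both boundary circles, where `f` has sup-norm at
most `M` and mean zero, satisfies `|h(L/2, y)| ≤ K₀ · M · e^{-L/2}` on the central circle. -/
theorem central_circle_decay :
    ∃ K₀ : ℝ, 0 < K₀ ∧
      ∀ (L M : ℝ) (f : ℝ → ℝ) (h : ℝ × ℝ → ℝ),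
        1 < L → 0 ≤ M →
        Continuous f →
        (∀ y : ℝ, f (y + 2 * π) = f y) →
        (∀ y : ℝ, |f y| ≤ M) →
        (∫ y in (0 : ℝ)..(2 * π), f y) = 0 →
        ContinuousOn h (Set.Icc 0 L ×ˢ (Set.univ : Set ℝ)) →
        (∀ x ∈ Set.Icc (0 : ℝ) L, ∀ y : ℝ, h (x, y + 2 * π) = h (x, y)) →
        HarmonicOn h (Set.Ioo 0 L ×ˢ (Set.univ : Set ℝ)) →
        (∀ y : ℝ, h (0, y) = f y) →
        (∀ y : ℝ, h (L, y) = f y) →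
        ∀ y : ℝ, |h (L / 2, y)| ≤ K₀ * M * Real.exp (-L / 2) := by
  refine ⟨2 * Real.exp (1/2) * (∑' n : ℤ, Real.exp (-1/2) ^ n.natAbs) + 1, ?_, ?_⟩
  · have : 0 ≤ ∑' n : ℤ, Real.exp (-1/2) ^ n.natAbs := tsum_nonneg fun n => by positivity
    positivity
  intro L M f h hL hM hf hfp hb hi hc hp hh h0 h1 y
  haveI : Fact (0 < 2 * π) := ⟨Real.two_pi_pos⟩
  have hmid : L / 2 ∈ Set.Icc 0 L := ⟨by linarith, by linarith⟩
  have per : Function.Periodic (fun y => (h (L / 2, y) : ℂ)) (2 * π) := fun y => by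
    simp only [hp _ hmid y]
  have gc : Continuous (fun y => (h (L / 2, y) : ℂ)) := by
    refine Complex.continuous_ofReal.comp ?_
    rw [← continuousOn_univ]
    exact hc.comp (by fun_prop) (fun y _ => ⟨hmid, trivial⟩)
  let g : C(AddCircle (2 * π), ℂ) := ⟨per.lift, continuous_coinduced_dom.mpr gc⟩
  have gv : ∀ y : ℝ, g (y : AddCircle (2 * π)) = (h (L / 2, y) : ℂ) := fun y => per.lift_coe y
  have coef : ∀ n : ℤ, ‖fourierCoeff g n‖ ≤
      2 * Real.exp (1/2) * M * Real.exp (-L / 2) * Real.exp (-1/2) ^ n.natAbs := by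
    intro n
    rw [fourierCoeff_eq_intervalIntegral g n 0, zero_add]
    simp only [gv, smul_eq_mul]
    have hb := ccd_bound hL hM hb hi hc hp hh h0 h1 n
      (fun y : ℝ => fourier (-n) (y : AddCircle (2 * π))) (fun y => by
        rw [fourier_coe_apply]
        congr 1
        have : (π : ℂ) ≠ 0 := by exact_mod_cast Real.pi_ne_zero
        push_cast
        field_simp)
    rw [norm_smul, Real.norm_eq_abs, abs_of_pos (by positivity)]
    rw [one_div, inv_mul_le_iff₀ Real.two_pi_pos]
    exact hb
  have sb := ccd_summable.mul_left (2 * Real.exp (1/2) * M * Real.exp (-L / 2))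
  have hs : Summable (fourierCoeff g) := Summable.of_norm_bounded sb coef
  have hsum := has_pointwise_sum_fourier_series_of_summable hs (y : AddCircle (2 * π))
  rw [gv] at hsum
  have fin : ‖(h (L / 2, y) : ℂ)‖ ≤
      ∑' n : ℤ, 2 * Real.exp (1/2) * M * Real.exp (-L / 2) * Real.exp (-1/2) ^ n.natAbs := by
    rw [← hsum.tsum_eq]
    refine tsum_of_norm_bounded sb.hasSum fun n => ?_
    have : ‖fourier n (y : AddCircle (2 * π))‖ = 1 := by
      rw [fourier_apply]; exact Circle.norm_coe _
    rw [norm_smul, this, mul_one]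
    exact coef n
  rw [Complex.norm_real, Real.norm_eq_abs, tsum_mul_left] at fin
  have : 0 ≤ M * Real.exp (-L / 2) := by positivity
  refine fin.trans ?_
  linarith
end

section
/- Let U ⊆ ℝ² be an open connected set whose intersection with the x-axis ℝ × {0} is nonempty, and let h : U → ℝ be harmonic on U. Suppose that for every point (x, 0) ∈ U one has h(x, 0) = 0 and ∂h/∂y (x, 0) = 0. Then h is identically zero on U. -/
open Real

lemma curve_x (x y : ℝ) : HasDerivAt (fun t : ℝ => (⟨t, y⟩ : ℂ)) 1 x := by
  have h1 : HasDerivAt (fun t : ℝ => (t : ℂ) + (y : ℂ) * Complex.I) 1 x :=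
    (Complex.ofRealCLM.hasDerivAt (x := x)).add_const _
  convert h1 using 2 with t
  apply Complex.ext <;> simp

lemma curve_y (x y : ℝ) : HasDerivAt (fun t : ℝ => (⟨x, t⟩ : ℂ)) Complex.I y := by
  have h1 : HasDerivAt (fun t : ℝ => (x : ℂ) + (t : ℂ) * Complex.I) (1 * Complex.I) y :=
    ((Complex.ofRealCLM.hasDerivAt (x := y)).mul_const _).const_add _
  rw [one_mul] at h1
  convert h1 using 2 with t
  apply Complex.ext <;> simp

/-- Second derivative along a curve of constant velocity. -/
lemma second_deriv_curve (f : ℂ → ℝ) (c : ℝ → ℂ) (v : ℂ) (hc : ∀ t, HasDerivAt c v t)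
    (V : Set ℂ) (hV : IsOpen V) (hf : ContDiffOn ℝ 2 f V) (t : ℝ) (ht : c t ∈ V) :
    deriv (fun s => deriv (fun s' => f (c s')) s) t = fderiv ℝ (fderiv ℝ f) (c t) v v := by
  have hfa : ∀ z ∈ V, ContDiffAt ℝ 2 f z := fun z hz => hf.contDiffAt (hV.mem_nhds hz)
  have hev : (fun s => deriv (fun s' => f (c s')) s) =ᶠ[nhds t] fun s => fderiv ℝ f (c s) v := by
    filter_upwards [(hc t).continuousAt.preimage_mem_nhds (hV.mem_nhds ht)] with s hs
    exact ((((hfa _ hs).differentiableAt (by norm_num)).hasFDerivAt).comp_hasDerivAt s (hc s)).deriv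
  rw [hev.deriv_eq]
  have hd : DifferentiableAt ℝ (fderiv ℝ f) (c t) :=
    ((hfa _ ht).fderiv_right (m := 1) (by norm_num)).differentiableAt (by norm_num)
  have h2 := hd.hasFDerivAt.comp_hasDerivAt t (hc t)
  have h3 := h2.clm_apply (hasDerivAt_const t v)
  simpa using h3.deriv

/-- Unique continuation: a harmonic function on an open connected set `U ⊆ ℝ²` meeting
the x-axis, which vanishes to first order along the x-axis (both the value and the
normal derivative `∂h/∂y` vanish at every point of `U` on the x-axis), vanishes
identically on `U`. -/
theorem harmonic_unique_continuation (U : Set (ℝ × ℝ)) (hU : IsOpen U)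
    (hconn : IsConnected U) (hne : (U ∩ {p : ℝ × ℝ | p.2 = 0}).Nonempty)
    (h : ℝ × ℝ → ℝ) (hharm : HarmonicOn h U)
    (hval : ∀ p ∈ U, p.2 = 0 → h p = 0)
    (hnormal : ∀ p ∈ U, p.2 = 0 → deriv (fun y => h (p.1, y)) p.2 = 0) :
    ∀ p ∈ U, h p = 0 := by
  obtain ⟨hC, hL⟩ := hharm
  set e := Complex.equivRealProdCLM with he
  let f : ℂ → ℝ := fun z => h (z.re, z.im)
  let V : Set ℂ := e ⁻¹' U
  have hV : IsOpen V := hU.preimage e.continuous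
  have hVc : IsPreconnected V := by
    have : V = e.symm '' U := by
      ext z; simp only [V, Set.mem_preimage, Set.mem_image]
      exact ⟨fun hz => ⟨_, hz, by simp⟩, by rintro ⟨w, hw, rfl⟩; simpa using hw⟩
    rw [this]
    exact hconn.isPreconnected.image _ e.symm.continuous.continuousOn
  have hf : ContDiffOn ℝ 2 f V :=
    hC.comp (e.contDiff.contDiffOn) (fun z hz => hz)
  have hfa : ∀ z ∈ V, ContDiffAt ℝ 2 f z := fun z hz => hf.contDiffAt (hV.mem_nhds hz)
  have hfd : ∀ z ∈ V, DifferentiableAt ℝ f z := fun z hz => (hfa z hz).differentiableAt (by norm_num)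
  have hlap : ∀ z ∈ V, Laplacian.laplacian f z = 0 := by
    intro z hz
    rw [InnerProductSpace.laplacian_eq_iteratedFDeriv_complexPlane]
    have hl := hL (z.re, z.im) hz
    have h1 := second_deriv_curve f (fun t => ⟨t, z.im⟩) 1 (fun t => curve_x t z.im) V hV hf z.re hz
    have h2 := second_deriv_curve f (fun t => ⟨z.re, t⟩) Complex.I
      (fun t => curve_y z.re t) V hV hf z.im hz
    simp only [laplacian] at hl
    simp only [f] at h1 h2
    rw [h1, h2] at hl
    simpa [iteratedFDeriv_two_apply] using hl
  have hH : ∀ z ∈ V, InnerProductSpace.HarmonicAt f z := fun z hz =>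
    ⟨hfa z hz, Filter.eventually_of_mem (hV.mem_nhds hz) hlap⟩
  have hg : AnalyticOnNhd ℂ (fun z ↦ (fderiv ℝ f z 1 : ℂ) - Complex.I * fderiv ℝ f z Complex.I) V :=
    fun z hz => HarmonicAt.analyticAt_complex_partial (hH z hz)
  obtain ⟨p₀, hp₀, hp₀'⟩ := hne
  have hp₀2 : p₀.2 = 0 := hp₀'
  let c : ℝ → ℂ := fun t => ⟨t, 0⟩
  have hc : ∀ t, HasDerivAt c 1 t := fun t => curve_x t 0
  have hz₀ : c p₀.1 ∈ V := by
    change (p₀.1, (0:ℝ)) ∈ U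
    rw [← hp₀2]; exact hp₀
  have haxis : ∀ t : ℝ, c t ∈ V → (fderiv ℝ f (c t) 1 : ℂ) - Complex.I * fderiv ℝ f (c t) Complex.I = 0 := by
    intro t ht
    have hx : fderiv ℝ f (c t) 1 = 0 := by
      rw [← ((hfd _ ht).hasFDerivAt.comp_hasDerivAt t (hc t)).deriv]
      have : f ∘ c =ᶠ[nhds t] fun _ => (0:ℝ) := by
        filter_upwards [(hc t).continuousAt.preimage_mem_nhds (hV.mem_nhds ht)] with s hs
        exact hval (s, 0) hs rfl
      rw [this.deriv_eq]; simp
    have hy : fderiv ℝ f (c t) Complex.I = 0 := by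
      rw [← (HasFDerivAt.comp_hasDerivAt (f := fun s : ℝ => (⟨t, s⟩ : ℂ)) 0
        (hfd _ ht).hasFDerivAt (curve_y t 0)).deriv]
      exact hnormal (t, 0) ht rfl
    simp [hx, hy]
  have hfreq : ∃ᶠ z in nhdsWithin (c p₀.1) {c p₀.1}ᶜ,
      (fderiv ℝ f z 1 : ℂ) - Complex.I * fderiv ℝ f z Complex.I = 0 := by
    have ht : Filter.Tendsto c (nhdsWithin p₀.1 {p₀.1}ᶜ) (nhdsWithin (c p₀.1) {c p₀.1}ᶜ) := by
      refine (hc p₀.1).continuousAt.continuousWithinAt.tendsto_nhdsWithin ?_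
      intro s hs hs'
      exact hs (congrArg Complex.re hs')
    refine ht.frequently (Filter.Eventually.frequently ?_)
    refine Filter.Eventually.filter_mono nhdsWithin_le_nhds ?_
    filter_upwards [(hc p₀.1).continuousAt.preimage_mem_nhds (hV.mem_nhds hz₀)] with s hs
    exact haxis s hs
  have hzero := hg.eqOn_zero_of_preconnected_of_frequently_eq_zero hVc hz₀ hfreq
  have hfz : Set.EqOn (fderiv ℝ f) 0 V := by
    intro z hz
    have h0 := hzero hz
    simp only [Pi.zero_apply] at h0
    have hr := congrArg Complex.re h0
    have hi := congrArg Complex.im h0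
    simp at hr hi
    ext a
    have ha : a = a.re • (1 : ℂ) + a.im • Complex.I := by simp
    rw [ha, map_add, map_smul, map_smul, hr, hi]
    simp
  intro p hp
  have hpV : (⟨p.1, p.2⟩ : ℂ) ∈ V := hp
  have := hV.is_const_of_fderiv_eq_zero hVc (fun z hz => (hfd z hz).differentiableWithinAt) hfz hpV hz₀
  change h p = h (p₀.1, 0) at this
  rw [this]
  exact hval (p₀.1, 0) hz₀ rfl
end
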